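/- Correctness of resolution: let x be a variable, let C, C' and α be multisets of literals, and suppose an assignment σ exactly satisfies both the clause (C ∨ x) and the clause (C' ∨ ¬x). Then σ exactly satisfies the clause (x ∨ α) if and only if σ exactly satisfies the clause (C' ∨ α). -/

import Mathlib

/-- A literal over a variable set `V` is a variable or its negation. -/
inductive Lit (V : Type*) where
  | pos : V → Lit V
  | neg : V → Lit V
  deriving DecidableEq

/-- Evaluation of a literal under an assignment `σ`. -/
def Lit.eval {V : Type*} (σ : V → Bool) : Lit V → Bool
  | .pos v => σ v
  | .neg v => !σ v

/-- `σ` exactly satisfies a clause (multiset of literals) `C` if exactly one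
literal of `C`, counted with multiplicity, evaluates to `true`. -/
def ExactSat {V : Type*} (σ : V → Bool) (C : Multiset (Lit V)) : Prop :=
  (C.countP fun l => Lit.eval σ l = true) = 1

/-!
If `C' ∨ ¬x` is exactly satisfied, then `C'` contains one true literal when `x` is true and none
when `x` is false. So `C'` has as many true literals as the one-literal clause `x`, and replacing
`x` by `C'` does not change the number of true literals of a clause.
-/

section

variable {V : Type*} {σ : V → Bool} {l l' : Lit V} {C D : Multiset (Lit V)}

/-- The number of literals of the clause `C` that are true under `σ`, counted with multiplicity. -/
def trueCount (σ : V → Bool) (C : Multiset (Lit V)) : ℕ :=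
  C.countP fun l => l.eval σ = true

theorem exactSat_iff_trueCount_eq_one : ExactSat σ C ↔ trueCount σ C = 1 :=
  Iff.rfl

theorem trueCount_add (σ : V → Bool) (C D : Multiset (Lit V)) :
    trueCount σ (C + D) = trueCount σ C + trueCount σ D :=
  Multiset.countP_add _ C D

theorem trueCount_singleton (σ : V → Bool) (l : Lit V) :
    trueCount σ {l} = (l.eval σ).toNat := by
  cases h : l.eval σ <;> simp [trueCount, ← Multiset.cons_zero, h]

theorem exactSat_add_congr (h : trueCount σ C = trueCount σ D) (α : Multiset (Lit V)) :
    ExactSat σ (C + α) ↔ ExactSat σ (D + α) := by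
  rw [exactSat_iff_trueCount_eq_one, exactSat_iff_trueCount_eq_one, trueCount_add, trueCount_add, h]

theorem exactSat_cons_iff_trueCount_eq_toNat_not :
    ExactSat σ (l ::ₘ C) ↔ trueCount σ C = (!l.eval σ).toNat := by
  rw [exactSat_iff_trueCount_eq_one, ← Multiset.singleton_add, trueCount_add, trueCount_singleton]
  cases l.eval σ <;> simp

theorem resolution_correct_general (hl : l'.eval σ = !l.eval σ) (hC : ExactSat σ (l' ::ₘ C))
    (α : Multiset (Lit V)) : ExactSat σ (l ::ₘ α) ↔ ExactSat σ (C + α) := by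
  have same_count : trueCount σ {l} = trueCount σ C := by
    rw [trueCount_singleton, exactSat_cons_iff_trueCount_eq_toNat_not.mp hC, hl, Bool.not_not]
  rw [← Multiset.singleton_add]
  exact exactSat_add_congr same_count α

end

theorem resolution_correct {V : Type*}
    (σ : V → Bool) (x : V) (C C' α : Multiset (Lit V))
    (h1 : ExactSat σ (Lit.pos x ::ₘ C))
    (h2 : ExactSat σ (Lit.neg x ::ₘ C')) :
    ExactSat σ (Lit.pos x ::ₘ α) ↔ ExactSat σ (C' + α) :=
  resolution_correct_general rfl h2 α
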